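/- Let R be a polynomial ring over a field K and let I be an ideal of R minimally generated by n ≥ 3 quadrics with ht(I) = 2. If p is a minimal prime of I with ht(p) = 2, then e(R/p) ≤ 3. -/

import Mathlib

open MvPolynomial Filter

universe u

/-- `PdLE R n M` means the `R`-module `M` has projective dimension at most `n`:
either `M` is projective (`n = 0`), or `M` is a quotient of a free module by a
submodule of projective dimension at most `n - 1`. -/
def PdLE (R : Type u) [CommRing R] : ℕ → (M : Type u) → [AddCommGroup M] → [Module R M] → Prop
  | 0, M, _, _ => Module.Projective R M
  | n + 1, M, _, _ => ∃ (F : Type u) (_ : AddCommGroup F) (_ : Module R F),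
      Module.Free R F ∧ ∃ f : F →ₗ[R] M, Function.Surjective f ∧ PdLE R n (LinearMap.ker f)

/-- The projective dimension of an `R`-module `M`, as an element of `ℕ∞`
(`⊤` if `M` has no finite free resolution). -/
noncomputable def projDim (R : Type u) [CommRing R] (M : Type u) [AddCommGroup M]
    [Module R M] : ℕ∞ :=
  sInf ((fun n : ℕ => (n : ℕ∞)) '' {n : ℕ | PdLE R n M})

/-- The height of an ideal: the infimum of the heights of the prime ideals containing it. -/
noncomputable def idealHeight {R : Type*} [CommRing R] (I : Ideal R) : ℕ∞ :=
  ⨅ p ∈ {p : PrimeSpectrum R | I ≤ p.asIdeal}, Order.height p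

/-- The length of a module, defined as the Krull dimension of its lattice of submodules. -/
noncomputable def moduleLength (R : Type u) [CommRing R] (M : Type u) [AddCommGroup M]
    [Module R M] : WithBot ℕ∞ :=
  Order.krullDim (Submodule R M)

/-- `IsHSMultiplicity R mx I e` asserts that the Hilbert–Samuel multiplicity of `R/I`
with respect to the ideal `mx` equals `e`: for `d = dim R/I` there is a polynomial `P`
of degree `d` with `e = d! · (leading coefficient of P)` such that
`length (R/(I + mx^n)) = P(n)` for all large `n`. -/
def IsHSMultiplicity (R : Type u) [CommRing R] (mx I : Ideal R) (e : ℕ) : Prop :=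
  ∃ (d : ℕ) (P : Polynomial ℚ),
    ringKrullDim (R ⧸ I) = (d : WithBot ℕ∞) ∧
    P.natDegree = d ∧
    (e : ℚ) = P.leadingCoeff * d.factorial ∧
    ∀ᶠ n : ℕ in Filter.atTop, ∃ k : ℕ, (k : ℚ) = P.eval (n : ℚ) ∧
      moduleLength R (R ⧸ (I ⊔ mx ^ n)) = ((k : ℕ∞) : WithBot ℕ∞)

/-- A matrix over a `K`-algebra is `1`-generic if it has no generalized zero entry:
for every nonzero vectors `u`, `v` of scalars, `uᵀ M v ≠ 0`. -/
def OneGeneric (K : Type*) [Field K] {R : Type u} [CommRing R] [Algebra K R]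
    {m l : ℕ} (M : Matrix (Fin m) (Fin l) R) : Prop :=
  ∀ (u : Fin m → K) (v : Fin l → K), u ≠ 0 → v ≠ 0 →
    ∑ i, ∑ j, algebraMap K R (u i * v j) * M i j ≠ 0

/-- The ideal of all `2 × 2` minors of a `2 × l` matrix. -/
def minors2 {R : Type u} [CommRing R] {l : ℕ} (M : Matrix (Fin 2) (Fin l) R) : Ideal R :=
  Ideal.span (Set.range fun p : Fin l × Fin l => M 0 p.1 * M 1 p.2 - M 0 p.2 * M 1 p.1)

/-- The homogeneous maximal ideal of a polynomial ring. -/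
noncomputable def maxIdeal (K : Type*) [Field K] (σ : Type*) : Ideal (MvPolynomial σ K) :=
  Ideal.span (Set.range (X : σ → MvPolynomial σ K))

/-- The ideal represented by minors by the `2 × (n+1)` matrix with first column `(x, y)ᵀ`
and remaining columns `(u j, v j)ᵀ`: it is generated by the `2 × 2` minors involving
the first column. -/
def repByMinors {R : Type u} [CommRing R] {n : ℕ} (x y : R) (u v : Fin n → R) : Ideal R :=
  Ideal.span (Set.range fun j : Fin n => x * v j - y * u j)

/-!
The quadrics in `I` have no common factor, so two of them, `a` and `b`, are relatively prime, and
some generator `q` of `I` lies outside `J = (a, b)`. Let `m + 2` be the number of variables. Making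
`a` monic by a change of coordinates, and then doing the same in one variable fewer for a multiple
of `b` modulo `a`, yields `φ : K[y₁, …, y_m] → R` for which `R/J` is integral over
`K[y₁, …, y_m]` and, by flatness, no nonzero `φ s` is a zero divisor modulo `J`. As `p` is minimal
over `J`, the ring `R/p` is an integral extension of `K[y₁, …, y_m]`.

The affine Hilbert function `H_J` of `J` counts dimensions of spaces of residue classes of
polynomials of degree at most `n`. For the homogeneous ideal `p` it is the Hilbert–Samuel function
of `R/p`, and it is eventually polynomial because Gröbner theory reduces it to a count of monomials.
Counting multiples of `a` and `b` gives `H_J n ≤ deg a * deg b * n ^ m / m! + O(n ^ (m - 1))`, while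
the elements `q * φ s` of `p`, with `s` of bounded degree, show that `H_J n - H_p n` grows at least
like a positive multiple of `n ^ m`. Hence `e(R/p)` is strictly smaller than `deg a * deg b = 4`.
-/

section CountingMonomials

lemma exists_finite_upperClosure_eq {α : Type*} [PartialOrder α] [WellQuasiOrderedLE α]
    {U : Set α} (hU : IsUpperSet U) : ∃ s : Set α, s.Finite ∧ (upperClosure s : Set α) = U := by
  refine ⟨{x | Minimal (· ∈ U) x},
    WellQuasiOrderedLE.finite_of_isAntichain (setOfPred_minimal_antichain _), ?_⟩
  ext x
  simp only [SetLike.mem_coe, mem_upperClosure, Set.mem_ofPred_eq]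
  refine ⟨fun ⟨y, hy, hyx⟩ ↦ hU hyx hy.prop, fun hx ↦ ?_⟩
  obtain ⟨y, hyx, hy⟩ := exists_minimal_le_of_wellFoundedLT (· ∈ U) x hx
  exact ⟨y, hy, hyx⟩

variable {σ : Type*}

lemma ncard_setOf_degree_le [Fintype σ] (n : ℕ) :
    {v : σ →₀ ℕ | v.degree ≤ n}.ncard = (n + Fintype.card σ).choose (Fintype.card σ) := by
  classical
  have hdisj : (Finset.range (n + 1) : Set ℕ).PairwiseDisjoint
      (Finset.univ (α := σ)).finsuppAntidiag := fun i _ j _ hij ↦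
    Finset.disjoint_left.2 fun v hi hj ↦
      hij ((Finset.mem_finsuppAntidiag.1 hi).1.symm.trans (Finset.mem_finsuppAntidiag.1 hj).1)
  have hunion : {v : σ →₀ ℕ | v.degree ≤ n} =
      (Finset.range (n + 1)).biUnion (Finset.univ (α := σ)).finsuppAntidiag := by
    ext v
    simp [Finsupp.degree_eq_sum]
  rw [hunion, Set.ncard_coe_finset, Finset.card_biUnion hdisj]
  simp only [Finset.card_finsuppAntidiag_nat_eq_multichoose, Finset.card_univ,
    Nat.sum_range_multichoose]

lemma ncard_setOf_le_and_degree_le [Fintype σ] {w : σ →₀ ℕ} {n : ℕ} (hw : w.degree ≤ n) :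
    {v | w ≤ v ∧ v.degree ≤ n}.ncard =
      (n - w.degree + Fintype.card σ).choose (Fintype.card σ) := by
  have himage : {v | w ≤ v ∧ v.degree ≤ n} = (w + ·) '' {v | v.degree ≤ n - w.degree} := by
    ext v
    simp only [Set.mem_ofPred_eq, Set.mem_image]
    constructor
    · rintro ⟨hwv, hv⟩
      obtain ⟨v, rfl⟩ := exists_add_of_le hwv
      exact ⟨v, by rw [map_add] at hv; omega, rfl⟩
    · rintro ⟨v, hv, rfl⟩
      exact ⟨le_self_add, by rw [map_add]; omega⟩
  rw [himage, Set.ncard_image_of_injective _ (add_right_injective w), ncard_setOf_degree_le]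

/- Inclusion–exclusion on the generators of the upper set: the exponents `v ≥ w` lying above a
new generator `u` but above none of the old ones are the `v ≥ w ⊔ u` above none of the old ones. -/
lemma exists_eval_eq_ncard_notMem_upperClosure [Finite σ] {s : Set (σ →₀ ℕ)} (hs : s.Finite)
    (w : σ →₀ ℕ) : ∃ P : Polynomial ℚ, ∀ᶠ n : ℕ in atTop,
      ({v | (w ≤ v ∧ v.degree ≤ n) ∧ v ∉ upperClosure s}.ncard : ℚ) = P.eval (n : ℚ) := by
  classical
  have := Fintype.ofFinite σ
  induction s, hs using Set.Finite.induction_on generalizing w with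
  | empty =>
    refine ⟨Polynomial.preHilbertPoly ℚ (Fintype.card σ) w.degree, ?_⟩
    filter_upwards [eventually_ge_atTop w.degree] with n hn
    simp only [upperClosure_empty, UpperSet.notMem_top, not_false_eq_true, and_true,
      ncard_setOf_le_and_degree_le hn, Polynomial.preHilbertPoly_eq_choose_sub_add _ _ hn]
  | @insert u s _ _ ih =>
    obtain ⟨P, hP⟩ := ih w
    obtain ⟨Q, hQ⟩ := ih (w ⊔ u)
    refine ⟨P - Q, ?_⟩
    filter_upwards [hP, hQ] with n hPn hQn
    have hsub : {v | (w ⊔ u ≤ v ∧ v.degree ≤ n) ∧ v ∉ upperClosure s} ⊆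
        {v | (w ≤ v ∧ v.degree ≤ n) ∧ v ∉ upperClosure s} :=
      fun v hv ↦ ⟨⟨le_sup_left.trans hv.1.1, hv.1.2⟩, hv.2⟩
    have hfin : {v | (w ≤ v ∧ v.degree ≤ n) ∧ v ∉ upperClosure s}.Finite :=
      (Finsupp.finite_of_degree_le n).subset fun v hv ↦ hv.1.2
    have hdiff : {v | (w ≤ v ∧ v.degree ≤ n) ∧ v ∉ upperClosure (insert u s)} =
        {v | (w ≤ v ∧ v.degree ≤ n) ∧ v ∉ upperClosure s} \
          {v | (w ⊔ u ≤ v ∧ v.degree ≤ n) ∧ v ∉ upperClosure s} := by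
      ext v
      simp only [mem_upperClosure, Set.mem_insert_iff, exists_eq_or_imp, Set.mem_ofPred_eq,
        Set.mem_sdiff, sup_le_iff]
      grind
    rw [hdiff, Set.cast_ncard_sdiff hsub hfin, Polynomial.eval_sub, hPn, hQn]

lemma exists_eval_eq_ncard_compl [Finite σ] {U : Set (σ →₀ ℕ)} (hU : IsUpperSet U) :
    ∃ P : Polynomial ℚ, ∀ᶠ n : ℕ in atTop,
      ({v | v.degree ≤ n ∧ v ∉ U}.ncard : ℚ) = P.eval (n : ℚ) := by
  obtain ⟨s, hs, rfl⟩ := exists_finite_upperClosure_eq hU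
  simpa using exists_eval_eq_ncard_notMem_upperClosure hs 0

end CountingMonomials

section HilbertFunction

/-- The set of leading exponents, for the monomial order `m`, of the nonzero elements of `I`. -/
def leadingExponents {σ R : Type*} [CommSemiring R] (m : MonomialOrder σ)
    (I : Ideal (MvPolynomial σ R)) : Set (σ →₀ ℕ) :=
  m.degree '' {f | f ∈ I ∧ f ≠ 0}

lemma isUpperSet_leadingExponents {σ R : Type*} [CommRing R] [IsDomain R] (m : MonomialOrder σ)
    (I : Ideal (MvPolynomial σ R)) : IsUpperSet (leadingExponents m I) := by
  classical
  rintro _ w hvw ⟨f, ⟨hf, hf0⟩, rfl⟩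
  have hmono : monomial (w - m.degree f) (1 : R) ≠ 0 := by simp
  refine ⟨monomial (w - m.degree f) 1 * f, ⟨I.mul_mem_left _ hf, mul_ne_zero hmono hf0⟩, ?_⟩
  rw [m.degree_mul hmono hf0, m.degree_monomial, if_neg one_ne_zero, tsub_add_cancel_of_le hvw]

/-- The affine Hilbert function of `I`: its value at `n` is the dimension of the space of residue
classes modulo `I` of polynomials of total degree at most `n`. For homogeneous `I` this is the
cumulative Hilbert function of the graded ring `R ⧸ I`. -/
noncomputable def affineHilbert {σ K : Type*} [Field K] (I : Ideal (MvPolynomial σ K))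
    (n : ℕ) : ℕ :=
  Module.finrank K ((restrictTotalDegree σ K n).map (Ideal.Quotient.mkₐ K I).toLinearMap)

lemma finrank_map_of_disjoint_ker {K V W : Type*} [DivisionRing K] [AddCommGroup V] [Module K V]
    [AddCommGroup W] [Module K W] {f : V →ₗ[K] W} {S : Submodule K V}
    (h : Disjoint S f.ker) : Module.finrank K (S.map f) = Module.finrank K S := by
  rw [← LinearMap.range_domRestrict]
  exact LinearMap.finrank_range_of_inj (LinearMap.injective_domRestrict_iff.2 h)

variable {σ K : Type*} [Field K]

lemma ker_mkₐ_toLinearMap (I : Ideal (MvPolynomial σ K)) :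
    (Ideal.Quotient.mkₐ K I).toLinearMap.ker = I.restrictScalars K := by
  ext f
  simp [Ideal.Quotient.eq_zero_iff_mem]

section Standard

variable [LinearOrder σ] [WellFoundedGT σ]

lemma exists_sub_mem_of_totalDegree_le (I : Ideal (MvPolynomial σ K))
    {f : MvPolynomial σ K} {n : ℕ} (hf : f.totalDegree ≤ n) :
    ∃ r ∈ restrictSupport K {v | v.degree ≤ n ∧ v ∉ leadingExponents MonomialOrder.degLex I},
      f - r ∈ I := by
  obtain ⟨g, r, hfgr, hdeg, hr⟩ := MonomialOrder.degLex.div_set (B := {b | b ∈ I ∧ b ≠ 0})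
    (fun b hb ↦ by simpa using hb.2) f
  set q := Finsupp.linearCombination _ (fun b : {b | b ∈ I ∧ b ≠ 0} ↦ (b : MvPolynomial σ K)) g
    with hq
  rw [Finsupp.linearCombination_apply] at hq
  have hqI : q ∈ I := hq ▸ Ideal.sum_mem _ fun b _ ↦ I.mul_mem_left _ b.2.1
  have hqn : q.totalDegree ≤ n := by
    refine hq ▸ totalDegree_finsetSum_le fun b _ ↦ ?_
    change (g b * b).totalDegree ≤ n
    rw [mul_comm]
    exact (degLex_totalDegree_monotone (hdeg b)).trans hf
  refine ⟨r, fun v hv ↦ ⟨?_, ?_⟩, by rwa [hfgr, add_sub_cancel_right]⟩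
  · have hrn : r.totalDegree ≤ n := by
      rw [eq_sub_of_add_eq' hfgr.symm]
      exact (totalDegree_sub _ _).trans (max_le hf hqn)
    exact (le_totalDegree hv).trans hrn
  · rintro ⟨b, hb, rfl⟩
    exact hr _ hv b hb le_rfl

lemma affineHilbert_eq_ncard (I : Ideal (MvPolynomial σ K)) (n : ℕ) :
    affineHilbert I n =
      {v | v.degree ≤ n ∧ v ∉ leadingExponents MonomialOrder.degLex I}.ncard := by
  set S := {v | v.degree ≤ n ∧ v ∉ leadingExponents MonomialOrder.degLex I}
  have hmap : (restrictTotalDegree σ K n).map (Ideal.Quotient.mkₐ K I).toLinearMap =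
      (restrictSupport K S).map (Ideal.Quotient.mkₐ K I).toLinearMap := by
    refine le_antisymm ?_ (Submodule.map_mono (restrictSupport_mono _ fun v hv ↦ hv.1))
    rintro _ ⟨f, hf, rfl⟩
    obtain ⟨r, hr, hfr⟩ := exists_sub_mem_of_totalDegree_le I ((mem_restrictTotalDegree _ _ _).1 hf)
    exact ⟨r, hr, (Ideal.Quotient.eq.2 hfr).symm⟩
  have hdisj : Disjoint (restrictSupport K S) (Ideal.Quotient.mkₐ K I).toLinearMap.ker := by
    rw [ker_mkₐ_toLinearMap, Submodule.disjoint_def]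
    intro f hf hfI
    by_contra hf0
    exact (hf (MonomialOrder.degLex.degree_mem_support hf0)).2 ⟨f, ⟨hfI, hf0⟩, rfl⟩
  rw [affineHilbert, hmap, finrank_map_of_disjoint_ker hdisj,
    Module.finrank_eq_nat_card_basis (basisRestrictSupport K S), Nat.card_coe_set_eq]

end Standard

lemma exists_eval_eq_affineHilbert [Finite σ] (I : Ideal (MvPolynomial σ K)) :
    ∃ P : Polynomial ℚ, ∀ᶠ n : ℕ in atTop, (affineHilbert I n : ℚ) = P.eval (n : ℚ) := by
  classical
  let := linearOrderOfSTO (WellOrderingRel (α := σ))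
  simpa only [affineHilbert_eq_ncard] using
    exists_eval_eq_ncard_compl (isUpperSet_leadingExponents MonomialOrder.degLex I)

lemma finrank_restrictTotalDegree [Fintype σ] (n : ℕ) :
    Module.finrank K (restrictTotalDegree σ K n) =
      (n + Fintype.card σ).choose (Fintype.card σ) := by
  rw [← ncard_setOf_degree_le, ← Nat.card_coe_set_eq]
  exact Module.finrank_eq_nat_card_basis (basisRestrictSupport K _)

lemma affineHilbert_add_finrank_inf [Finite σ] (I : Ideal (MvPolynomial σ K)) (n : ℕ) :
    affineHilbert I n +
        Module.finrank K ↥(restrictTotalDegree σ K n ⊓ I.restrictScalars K) =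
      Module.finrank K (restrictTotalDegree σ K n) := by
  rw [← LinearMap.finrank_range_add_finrank_ker
    ((Ideal.Quotient.mkₐ K I).toLinearMap.domRestrict (restrictTotalDegree σ K n)),
    LinearMap.range_domRestrict, LinearMap.ker_domRestrict,
    ← Submodule.finrank_map_subtype_eq, Submodule.map_comap_subtype, ker_mkₐ_toLinearMap,
    affineHilbert]

lemma affineHilbert_add_finrank_le [Finite σ] {I J : Ideal (MvPolynomial σ K)} (hIJ : I ≤ J)
    {W : Submodule K (MvPolynomial σ K)} {n : ℕ} (hW : W ≤ restrictTotalDegree σ K n)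
    (hWJ : W ≤ J.restrictScalars K) (hWI : Disjoint W (I.restrictScalars K)) :
    affineHilbert J n + Module.finrank K W ≤ affineHilbert I n := by
  have hI := affineHilbert_add_finrank_inf I n
  have hJ := affineHilbert_add_finrank_inf J n
  have : FiniteDimensional K W := Submodule.finiteDimensional_of_le hW
  have hdisj : Disjoint W (restrictTotalDegree σ K n ⊓ I.restrictScalars K) :=
    hWI.mono_right inf_le_right
  have hsup : W ⊔ restrictTotalDegree σ K n ⊓ I.restrictScalars K ≤
      restrictTotalDegree σ K n ⊓ J.restrictScalars K :=
    sup_le (le_inf hW hWJ) (inf_le_inf_left _ hIJ)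
  have hle := Submodule.finrank_mono hsup
  have := Submodule.finrank_sup_add_finrank_inf_eq W
    (restrictTotalDegree σ K n ⊓ I.restrictScalars K)
  rw [hdisj.eq_bot, finrank_bot] at this
  omega

end HilbertFunction

section Length

open Module

lemma length_eq_length_of_pow_smul_eq_zero {K A : Type*} [CommRing K] [CommRing A] [Algebra K A]
    {𝔪 : Ideal A} (h𝔪 : Function.Surjective (algebraMap K (A ⧸ 𝔪))) (k : ℕ) (M : Type*)
    [AddCommGroup M] [Module A M] [Module K M] [IsScalarTower K A M]
    (hM : ∀ r ∈ 𝔪 ^ k, ∀ x : M, r • x = 0) : length A M = length K M := by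
  induction k generalizing M with
  | zero =>
    have : Subsingleton M := subsingleton_of_forall_eq 0 fun x ↦ by simpa using hM 1 (by simp) x
    rw [length_eq_zero, length_eq_zero]
  | succ k ih =>
    let S : Submodule A M := 𝔪 • ⊤
    have hS : ∀ r ∈ 𝔪 ^ k, ∀ x : S, r • x = 0 := by
      rintro r hr ⟨x, hx⟩
      refine Subtype.ext (?_ : r • x = 0)
      induction hx using Submodule.smul_induction_on' with
      | smul a ha y _ => rw [smul_smul, hM _ (pow_succ 𝔪 k ▸ Ideal.mul_mem_mul hr ha)]
      | add x _ y _ hx hy => rw [smul_add, hx, hy, add_zero]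
    have hQ : length A (M ⧸ S) = length K (M ⧸ S) := by
      let : Module (A ⧸ 𝔪) (M ⧸ S) := inferInstanceAs (Module (A ⧸ 𝔪) (M ⧸ 𝔪 • (⊤ : Submodule A M)))
      have : IsScalarTower K (A ⧸ 𝔪) (M ⧸ S) := ⟨fun c r x ↦ by
        obtain ⟨r, rfl⟩ := Ideal.Quotient.mk_surjective r
        exact smul_assoc c r x⟩
      rw [length_eq_of_surjective (R := A ⧸ 𝔪) h𝔪,
        length_eq_of_surjective (R := A ⧸ 𝔪) Ideal.Quotient.mk_surjective]
    rw [length_eq_add_of_exact S.subtype S.mkQ S.injective_subtype S.mkQ_surjective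
        (LinearMap.exact_subtype_mkQ S),
      length_eq_add_of_exact (S.subtype.restrictScalars K) (S.mkQ.restrictScalars K)
        S.injective_subtype S.mkQ_surjective (LinearMap.exact_subtype_mkQ S), ih S hS, hQ]

variable {σ : Type*} {K : Type*} [Field K]

lemma algebraMap_quotient_idealOfVars_surjective :
    Function.Surjective (algebraMap K (MvPolynomial σ K ⧸ idealOfVars σ K)) := by
  intro x
  obtain ⟨f, rfl⟩ := Ideal.Quotient.mk_surjective x
  refine ⟨coeff 0 f, Ideal.Quotient.eq.2 ?_⟩
  rw [algebraMap_eq, ← pow_one (idealOfVars σ K), mem_pow_idealOfVars_iff']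
  intro v hv
  obtain rfl : v = 0 := (Finsupp.degree_eq_zero_iff v).1 (Nat.lt_one_iff.1 hv)
  simp

lemma sub_sum_homogeneousComponent_mem (f : MvPolynomial σ K) (n : ℕ) :
    f - ∑ i ∈ Finset.range (n + 1), homogeneousComponent i f ∈ idealOfVars σ K ^ (n + 1) := by
  classical
  rw [mem_pow_idealOfVars_iff']
  intro v hv
  simp [coeff_sum, coeff_homogeneousComponent, hv]

lemma sum_homogeneousComponent_mem_restrictTotalDegree (f : MvPolynomial σ K) (n : ℕ) :
    ∑ i ∈ Finset.range (n + 1), homogeneousComponent i f ∈ restrictTotalDegree σ K n :=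
  Submodule.sum_mem _ fun i hi ↦ (mem_restrictTotalDegree _ _ _).2
    ((homogeneousComponent_isHomogeneous i f).totalDegree_le.trans
      (Nat.lt_succ_iff.1 (Finset.mem_range.1 hi)))

lemma disjoint_restrictTotalDegree_pow_idealOfVars (n : ℕ) :
    Disjoint (restrictTotalDegree σ K n) ((idealOfVars σ K ^ (n + 1)).restrictScalars K) := by
  rw [Submodule.disjoint_def]
  intro f hfn hf
  rw [Submodule.restrictScalars_mem, mem_pow_idealOfVars_iff'] at hf
  rw [mem_restrictTotalDegree] at hfn
  ext v
  rcases lt_or_ge v.degree (n + 1) with hv | hv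
  · exact hf v hv
  · exact coeff_eq_zero_of_totalDegree_lt (hfn.trans_lt hv)

attribute [local instance] gradedAlgebra in
lemma affineHilbert_sup_pow_idealOfVars [Finite σ] {p : Ideal (MvPolynomial σ K)}
    (hp : p.IsHomogeneous (homogeneousSubmodule σ K)) (n : ℕ) :
    affineHilbert (p ⊔ idealOfVars σ K ^ (n + 1)) n = affineHilbert p n := by
  have hinf : restrictTotalDegree σ K n ⊓ (p ⊔ idealOfVars σ K ^ (n + 1)).restrictScalars K =
      restrictTotalDegree σ K n ⊓ p.restrictScalars K := by
    refine le_antisymm ?_ (inf_le_inf_left _ fun _ h ↦ Ideal.mem_sup_left h)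
    rintro f ⟨hfn, hf⟩
    obtain ⟨a, ha, b, hb, rfl⟩ := Submodule.mem_sup.1 hf
    set a' := ∑ i ∈ Finset.range (n + 1), homogeneousComponent i a
    have ha' : a' ∈ p := Ideal.sum_mem _ fun i _ ↦ (mem_iff_homogeneousComponent_mem hp a).1 ha i
    have hsub : a + b - a' = 0 := by
      refine Submodule.disjoint_def.1 (disjoint_restrictTotalDegree_pow_idealOfVars n) _
        (Submodule.sub_mem _ hfn (sum_homogeneousComponent_mem_restrictTotalDegree a n)) ?_
      rw [add_sub_right_comm]
      exact Ideal.add_mem _ (sub_sum_homogeneousComponent_mem a n) hb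
    rw [sub_eq_zero.1 hsub] at hfn ⊢
    exact ⟨hfn, ha'⟩
  have h₁ := affineHilbert_add_finrank_inf (p ⊔ idealOfVars σ K ^ (n + 1)) n
  have h₂ := affineHilbert_add_finrank_inf p n
  rw [hinf] at h₁
  omega

lemma map_restrictTotalDegree_eq_top {J : Ideal (MvPolynomial σ K)} {n : ℕ}
    (hJ : idealOfVars σ K ^ (n + 1) ≤ J) :
    (restrictTotalDegree σ K n).map (Ideal.Quotient.mkₐ K J).toLinearMap = ⊤ := by
  refine Submodule.eq_top_iff'.2 fun x ↦ ?_
  obtain ⟨f, rfl⟩ := Ideal.Quotient.mk_surjective x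
  exact ⟨_, sum_homogeneousComponent_mem_restrictTotalDegree f n,
    (Ideal.Quotient.eq.2 (hJ (sub_sum_homogeneousComponent_mem f n))).symm⟩

attribute [local instance] gradedAlgebra in
lemma length_quotient_sup_pow_idealOfVars [Finite σ] {p : Ideal (MvPolynomial σ K)}
    (hp : p.IsHomogeneous (homogeneousSubmodule σ K)) (n : ℕ) :
    length (MvPolynomial σ K) (MvPolynomial σ K ⧸ (p ⊔ idealOfVars σ K ^ (n + 1))) =
      affineHilbert p n := by
  set J := p ⊔ idealOfVars σ K ^ (n + 1)
  have htop : (restrictTotalDegree σ K n).map (Ideal.Quotient.mkₐ K J).toLinearMap = ⊤ :=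
    map_restrictTotalDegree_eq_top le_sup_right
  have hfin : Module.Finite K (MvPolynomial σ K ⧸ J) :=
    ⟨htop ▸ (Module.Finite.iff_fg.1 inferInstance).map _⟩
  have hkill : ∀ r ∈ idealOfVars σ K ^ (n + 1), ∀ x : MvPolynomial σ K ⧸ J, r • x = 0 := by
    intro r hr x
    obtain ⟨f, rfl⟩ := Ideal.Quotient.mk_surjective x
    exact Ideal.Quotient.eq_zero_iff_mem.2 (Ideal.mul_mem_right _ _ (Ideal.mem_sup_right hr))
  rw [length_eq_length_of_pow_smul_eq_zero algebraMap_quotient_idealOfVars_surjective (n + 1) _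
    hkill, length_eq_finrank, ← finrank_top, ← htop, ← affineHilbert,
    affineHilbert_sup_pow_idealOfVars hp]

end Length

lemma isHomogeneous_of_mem_minimalPrimes {ι A : Type*} {S : Type*} [SetLike S A] [CommRing A]
    [AddCommMonoid ι] [LinearOrder ι] [IsOrderedCancelAddMonoid ι]
    [AddSubmonoidClass S A] {𝒜 : ι → S} [GradedRing 𝒜] {I p : Ideal A}
    (hI : I.IsHomogeneous 𝒜) (hp : p ∈ I.minimalPrimes) : p.IsHomogeneous 𝒜 := by
  have hle : I ≤ (p.homogeneousCore 𝒜).toIdeal := by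
    rw [← hI.toIdeal_homogeneousCore_eq_self]
    exact Ideal.homogeneousCore_mono _ hp.1.2
  have hcore := Ideal.toIdeal_homogeneousCore_le 𝒜 p
  rw [(hp.2 ⟨hp.1.1.homogeneousCore, hle⟩ hcore).antisymm hcore]
  exact HomogeneousIdeal.isHomogeneous _

attribute [local instance] gradedAlgebra in
lemma isHomogeneous_of_mem_minimalPrimes_span {R σ : Type*} [CommRing R]
    {s : Set (MvPolynomial σ R)} {d : ℕ} (hs : ∀ f ∈ s, f.IsHomogeneous d)
    {p : Ideal (MvPolynomial σ R)} (hp : p ∈ (Ideal.span s).minimalPrimes) :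
    p.IsHomogeneous (homogeneousSubmodule σ R) :=
  isHomogeneous_of_mem_minimalPrimes (Ideal.homogeneous_span _ _ fun f hf ↦ ⟨d, hs f hf⟩) hp

section Coprime

lemma idealHeight_eq_height {R : Type*} [CommRing R] (I : Ideal R) : idealHeight I = I.height := by
  apply le_antisymm
  · rw [Ideal.height_eq_inf_minimalPrimes]
    refine le_iInf₂ fun J hJ ↦ ?_
    rw [show J.height = _ from PrimeSpectrum.height_eq_orderHeight ⟨J, hJ.1.1⟩]
    exact iInf₂_le (⟨J, hJ.1.1⟩ : PrimeSpectrum R) hJ.1.2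
  · refine le_iInf₂ fun J hJ ↦ ?_
    rw [← PrimeSpectrum.height_eq_orderHeight]
    exact Ideal.height_mono hJ

lemma two_le_height_span_pair {R : Type*} [CommRing R] [IsDomain R]
    [UniqueFactorizationMonoid R] {a b : R} (ha : a ≠ 0)
    (hab : IsRelPrime a b) : 2 ≤ (Ideal.span {a, b}).height := by
  rw [Ideal.height_eq_inf_minimalPrimes]
  refine le_iInf₂ fun Q hQ ↦ ?_
  have := hQ.1.1
  have hmem : ∀ x ∈ ({a, b} : Set R), x ∈ Q := fun x hx ↦ hQ.1.2 (Ideal.subset_span hx)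
  by_contra! hlt
  rcases (ENat.lt_two_iff.1 hlt).lt_or_eq with h0 | h1
  · have hbot : Q = ⊥ := Ideal.height_eq_zero_iff_eq_bot.1 (Order.lt_one_iff.1 h0)
    exact ha (by simpa [hbot] using hmem a (by simp))
  · obtain ⟨π, rfl⟩ := (UniqueFactorizationMonoid.isPrincipal_of_height_eq_one h1).principal
    have hdvd : ∀ x ∈ ({a, b} : Set R), π ∣ x := fun x hx ↦ Ideal.mem_span_singleton.1 (hmem x hx)
    have hunit := hab (hdvd a (by simp)) (hdvd b (by simp))
    exact this.ne_top (Ideal.span_singleton_eq_top.2 hunit)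

lemma exists_isRelPrime_of_card_factors_le_two {R : Type*} [CommRing R] [IsDomain R]
    [UniqueFactorizationMonoid R] {a : R} (ha : a ≠ 0)
    (hcard : (UniqueFactorizationMonoid.factors a).card ≤ 2) (V : AddSubgroup R)
    (hV : ∀ π : R, Irreducible π → ∃ b ∈ V, ¬π ∣ b) : ∃ b ∈ V, IsRelPrime a b := by
  by_contra! h
  have hdvd : ∀ b ∈ V, ∃ π ∈ UniqueFactorizationMonoid.factors a, π ∣ b := by
    intro b hb
    contrapose! h
    refine ⟨b, hb, isRelPrime_of_no_nonunits_factors (fun h0 ↦ ha h0.1) fun z hz hz0 hza hzb ↦ ?_⟩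
    obtain ⟨π, hπ, hπz⟩ := WfDvdMonoid.exists_irreducible_factor hz hz0
    obtain ⟨ρ, hρ, hπρ⟩ :=
      UniqueFactorizationMonoid.exists_mem_factors_of_dvd ha hπ (hπz.trans hza)
    exact h ρ hρ (hπρ.symm.dvd.trans (hπz.trans hzb))
  have hirr : ∀ π ∈ UniqueFactorizationMonoid.factors a, ¬∀ b ∈ V, π ∣ b := fun π hπ hall ↦ by
    obtain ⟨b, hb, hbπ⟩ := hV π (UniqueFactorizationMonoid.irreducible_of_factor π hπ)
    exact hbπ (hall b hb)
  obtain h0 | h1 | h2 : (UniqueFactorizationMonoid.factors a).card = 0 ∨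
      (UniqueFactorizationMonoid.factors a).card = 1 ∨
      (UniqueFactorizationMonoid.factors a).card = 2 := by omega
  · rw [Multiset.card_eq_zero] at h0
    simpa [h0] using hdvd 0 V.zero_mem
  · obtain ⟨π, hπ⟩ := Multiset.card_eq_one.1 h1
    simp only [hπ, Multiset.mem_singleton, exists_eq_left, forall_eq] at hdvd hirr
    exact hirr hdvd
  · obtain ⟨π, ρ, hπρ⟩ := Multiset.card_eq_two.1 h2
    simp only [hπρ, Multiset.insert_eq_cons, Multiset.mem_cons, Multiset.mem_singleton,
      exists_eq_or_imp, exists_eq_left, forall_eq_or_imp, forall_eq] at hdvd hirr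
    have hunion : (V : Set R) ⊆ (Ideal.span {π}).toAddSubgroup ∪ (Ideal.span {ρ}).toAddSubgroup :=
      fun b hb ↦ (hdvd b hb).imp Ideal.mem_span_singleton.2 Ideal.mem_span_singleton.2
    rcases AddSubgroupClass.subset_union.1 hunion with hV | hV
    · exact hirr.1 fun b hb ↦ Ideal.mem_span_singleton.1 (hV hb)
    · exact hirr.2 fun b hb ↦ Ideal.mem_span_singleton.1 (hV hb)

variable {σ K : Type*} [Field K]

lemma card_factors_le_totalDegree {f : MvPolynomial σ K} (hf : f ≠ 0) :
    (UniqueFactorizationMonoid.factors f).card ≤ f.totalDegree := by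
  induction f using WfDvdMonoid.induction_on_irreducible with
  | zero => exact absurd rfl hf
  | unit u hu => simp [UniqueFactorizationMonoid.factors_of_isUnit hu]
  | mul g π hg hπ ih =>
    have hpos : π.totalDegree ≠ 0 := fun h ↦ by
      rw [totalDegree_eq_zero_iff_eq_C] at h
      refine hπ.not_isUnit (h ▸ (IsUnit.mk0 _ fun h0 ↦ hπ.ne_zero ?_).map C)
      rw [h, h0, C_0]
    have hcard := Multiset.card_eq_card_of_rel (UniqueFactorizationMonoid.factors_mul hπ.ne_zero hg)
    rw [Multiset.card_add, UniqueFactorizationMonoid.card_factors_of_irreducible hπ] at hcard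
    rw [totalDegree_mul_of_isDomain hπ.ne_zero hg]
    have := ih hg
    omega

lemma exists_isRelPrime_of_le_homogeneousSubmodule [Finite σ]
    {V : Submodule K (MvPolynomial σ K)} (hV : V ≤ homogeneousSubmodule σ K 2)
    (hht : 2 ≤ (Ideal.span (V : Set (MvPolynomial σ K))).height) :
    ∃ a ∈ V, ∃ b ∈ V, a ≠ 0 ∧ b ≠ 0 ∧ IsRelPrime a b := by
  obtain ⟨a, haV, ha⟩ : ∃ a ∈ V, a ≠ 0 := by
    by_contra! h
    rw [Ideal.span_eq_bot.2 h, Ideal.height_bot] at hht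
    simp at hht
  have hdeg : a.totalDegree = 2 := (hV haV).totalDegree ha
  obtain ⟨b, hbV, hab⟩ := exists_isRelPrime_of_card_factors_le_two ha
    (hdeg ▸ card_factors_le_totalDegree ha) V.toAddSubgroup fun π hπ ↦ by
      by_contra! h
      have hle : Ideal.span (V : Set (MvPolynomial σ K)) ≤ Ideal.span {π} :=
        Ideal.span_le.2 fun b hb ↦ Ideal.mem_span_singleton.2 (h b hb)
      have h2 := (hht.trans (Ideal.height_mono hle)).trans
        (Ideal.height_span_singleton_le_one hπ.not_isUnit)
      norm_num at h2
  refine ⟨a, haV, b, hbV, ha, ?_, hab⟩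
  rintro rfl
  have := (isUnit_iff_totalDegree_of_isReduced.1 (isRelPrime_zero_right.1 hab)).2
  omega

end Coprime

section KrullDimension

lemma ringKrullDim_mvPolynomial_of_field (K σ : Type*) [Field K] [Finite σ] :
    ringKrullDim (MvPolynomial σ K) = Nat.card σ := by
  rw [MvPolynomial.ringKrullDim_of_isNoetherianRing, ringKrullDim_eq_zero_of_field, zero_add]

variable {S T : Type*} [CommRing S] [CommRing T] {f : S →+* T}

lemma ringKrullDim_le_of_isIntegral (hint : f.IsIntegral) : ringKrullDim T ≤ ringKrullDim S := by
  algebraize [f]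
  refine Order.krullDim_le_of_strictMono (PrimeSpectrum.comap f) fun q q' h ↦ ?_
  rw [← PrimeSpectrum.asIdeal_lt_asIdeal] at h ⊢
  exact Ideal.IsIntegral.comap_lt_comap h

lemma le_ringKrullDim_of_injective_of_isIntegral (hinj : Function.Injective f)
    (hint : f.IsIntegral) : ringKrullDim S ≤ ringKrullDim T := by
  algebraize [f]
  refine iSup_le fun l ↦ ?_
  have hker : (⊥ : Ideal T).comap f ≤ l.head.asIdeal := by
    rw [← RingHom.ker_eq_comap_bot, (RingHom.injective_iff_ker_eq_bot f).1 hinj]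
    exact bot_le
  obtain ⟨Q, -, hQ, hQl⟩ := Ideal.exists_ideal_over_prime_of_isIntegral l.head.asIdeal ⊥ hker
  have : Q.LiesOver l.head.asIdeal := ⟨hQl.symm⟩
  obtain ⟨L, hL, -⟩ := Ideal.exists_ltSeries_of_hasGoingUp l Q
  exact hL ▸ Order.LTSeries.length_le_krullDim L

lemma ringKrullDim_eq_of_injective_of_isIntegral (hinj : Function.Injective f)
    (hint : f.IsIntegral) : ringKrullDim T = ringKrullDim S :=
  (ringKrullDim_le_of_isIntegral hint).antisymm
    (le_ringKrullDim_of_injective_of_isIntegral hinj hint)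

end KrullDimension

section MonicNormalization

lemma exists_weight_injOn {n : ℕ} {s : Set (Fin (n + 1) → ℕ)} (hs : s.Finite) :
    ∃ w : Fin n → ℕ, (∀ i, 0 < w i) ∧ s.InjOn fun v ↦ v 0 + ∑ i, w i * v i.succ := by
  induction n with
  | zero =>
    refine ⟨nofun, nofun, fun v _ v' _ h ↦ funext fun i ↦ ?_⟩
    simpa [Fin.fin_one_eq_zero] using h
  | succ n ih =>
    obtain ⟨w, hw, hinj⟩ := ih (hs.image Fin.tail)
    obtain ⟨B, hB⟩ := (hs.image fun v ↦ v 0).bddAbove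
    have hlt : ∀ v ∈ s, v 0 < B + 1 := fun v hv ↦ Nat.lt_succ_of_le (hB ⟨v, hv, rfl⟩)
    have hsum : ∀ v : Fin (n + 2) → ℕ,
        v 0 + ∑ i, (Fin.cons (B + 1) fun j ↦ (B + 1) * w j : Fin (n + 1) → ℕ) i * v i.succ =
          v 0 + (B + 1) * (Fin.tail v 0 + ∑ i, w i * Fin.tail v i.succ) := fun v ↦ by
      simp [Fin.sum_univ_succ, Fin.tail, mul_add, Finset.mul_sum, mul_assoc]
    refine ⟨Fin.cons (B + 1) fun j ↦ (B + 1) * w j,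
      Fin.cases (by simp) fun j ↦ by simp [hw j], fun v hv v' hv' h ↦ ?_⟩
    simp only [hsum] at h
    have hhead : v 0 = v' 0 := by
      simpa [Nat.mod_eq_of_lt, hlt v hv, hlt v' hv'] using congrArg (· % (B + 1)) h
    have htail : Fin.tail v = Fin.tail v' := hinj ⟨v, hv, rfl⟩ ⟨v', hv', rfl⟩
      (Nat.eq_of_mul_eq_mul_left B.succ_pos (Nat.add_left_cancel (hhead ▸ h)))
    rw [← Fin.cons_self_tail v, ← Fin.cons_self_tail v', hhead, htail]

variable {K : Type*} [Field K] {n : ℕ}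

/-- The endomorphism of a polynomial ring fixing the variable `X 0` and translating `X (i + 1)` by
the value of `t i` at `X 0`. Such substitutions are used to make a polynomial monic in `X 0`. -/
noncomputable def shear (t : Fin n → Polynomial K) :
    MvPolynomial (Fin (n + 1)) K →ₐ[K] MvPolynomial (Fin (n + 1)) K :=
  aeval (Fin.cons (X 0) fun i ↦ X i.succ + Polynomial.aeval (X 0) (t i))

lemma shear_X_zero (t : Fin n → Polynomial K) : shear t (X 0) = X 0 := by
  simp [shear]

lemma shear_X_succ (t : Fin n → Polynomial K) (i : Fin n) :
    shear t (X i.succ) = X i.succ + Polynomial.aeval (X 0) (t i) := by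
  simp [shear]

lemma shear_comp_shear_neg (t : Fin n → Polynomial K) :
    (shear t).comp (shear (-t)) = AlgHom.id K _ := by
  ext1 i
  cases i using Fin.cases with
  | zero => simp only [AlgHom.comp_apply, shear_X_zero, AlgHom.id_apply]
  | succ i =>
    rw [AlgHom.comp_apply, shear_X_succ, map_add, shear_X_succ, ← Polynomial.aeval_algHom_apply,
      shear_X_zero, Pi.neg_apply, map_neg, add_neg_cancel_right, AlgHom.id_apply]

/-- The coordinate change `shear t`, read as an isomorphism onto the polynomials in `X 0` whose
coefficients are polynomials in the remaining variables. -/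
noncomputable def shearEquiv (t : Fin n → Polynomial K) :
    MvPolynomial (Fin (n + 1)) K ≃ₐ[K] Polynomial (MvPolynomial (Fin n) K) :=
  (AlgEquiv.ofAlgHom (shear t) (shear (-t)) (shear_comp_shear_neg t)
    (by simpa using shear_comp_shear_neg (-t))).trans (finSuccEquiv K n)

lemma exists_shearEquiv_monomial_eq {w : Fin n → ℕ} (hw : ∀ i, 0 < w i) (v : Fin (n + 1) →₀ ℕ) :
    ∃ Q : Polynomial (MvPolynomial (Fin n) K), Q.Monic ∧ Q.natDegree = v 0 + ∑ i, w i * v i.succ ∧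
      ∀ c, shearEquiv (fun i ↦ Polynomial.X ^ w i) (monomial v c) = Polynomial.C (C c) * Q := by
  have hmonic : ∀ i ∈ Finset.univ, ((Polynomial.X ^ w i +
      Polynomial.C (X i : MvPolynomial (Fin n) K)) ^ v i.succ).Monic :=
    fun i _ ↦ (Polynomial.monic_X_pow_add_C _ (hw i).ne').pow _
  refine ⟨_, (Polynomial.monic_X_pow (v 0)).mul (Polynomial.monic_prod_of_monic _ _ hmonic),
    ?_, fun c ↦ ?_⟩
  · rw [(Polynomial.monic_X_pow _).natDegree_mul (Polynomial.monic_prod_of_monic _ _ hmonic),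
      Polynomial.natDegree_prod_of_monic _ _ hmonic]
    simp [mul_comm]
  · rw [monomial_eq, Finsupp.prod_fintype _ _ fun i ↦ pow_zero _, Fin.prod_univ_succ]
    simp only [shearEquiv, AlgEquiv.trans_apply, AlgEquiv.ofAlgHom_apply, map_mul, map_pow,
      map_prod, algHom_C, algebraMap_eq, shear_X_zero, shear_X_succ, map_add, finSuccEquiv_X_zero,
      finSuccEquiv_X_succ]
    simp [add_comm, finSuccEquiv_apply]

lemma exists_leadingCoeff_sum_eq {ι S : Type*} [Semiring S] {s : Finset ι} (hs : s.Nonempty)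
    {P : ι → Polynomial S} (hP : ∀ i ∈ s, P i ≠ 0)
    (hinj : Set.InjOn (fun i ↦ (P i).natDegree) s) :
    ∃ i ∈ s, (∑ j ∈ s, P j).leadingCoeff = (P i).leadingCoeff := by
  obtain ⟨i, hi, hmax⟩ := s.exists_max_image (fun i ↦ (P i).natDegree) hs
  have hle : (∑ j ∈ s, P j).natDegree ≤ (P i).natDegree :=
    Polynomial.natDegree_sum_le_of_forall_le _ _ hmax
  have hcoeff : (∑ j ∈ s, P j).coeff (P i).natDegree = (P i).leadingCoeff := by
    rw [Polynomial.finsetSum_coeff]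
    refine Finset.sum_eq_single_of_mem i hi fun j hj hji ↦ ?_
    exact Polynomial.coeff_eq_zero_of_natDegree_lt
      ((hmax j hj).lt_of_ne fun h ↦ hji (hinj hj hi h))
  have hne : (P i).leadingCoeff ≠ 0 := Polynomial.leadingCoeff_ne_zero.2 (hP i hi)
  refine ⟨i, hi, ?_⟩
  rw [Polynomial.leadingCoeff,
    hle.antisymm (Polynomial.le_natDegree_of_ne_zero (hcoeff.trans_ne hne)), hcoeff]

lemma exists_isUnit_leadingCoeff_shearEquiv {f : MvPolynomial (Fin (n + 1)) K} (hf : f ≠ 0) :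
    ∃ t, IsUnit (shearEquiv t f).leadingCoeff := by
  obtain ⟨w, hw, hinj⟩ :=
    exists_weight_injOn ((f.support.finite_toSet).image fun v : Fin (n + 1) →₀ ℕ ↦ ⇑v)
  choose Q hQmonic hQdeg hQ using exists_shearEquiv_monomial_eq (K := K) hw
  have hcoeff : ∀ v ∈ f.support, IsUnit (C (coeff v f) : MvPolynomial (Fin n) K) := fun v hv ↦
    (IsUnit.mk0 _ (mem_support_iff.1 hv)).map C
  have hlc : ∀ v, (Polynomial.C (C (coeff v f)) * Q v).leadingCoeff = C (coeff v f) := fun v ↦ by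
    rw [(hQmonic v).leadingCoeff_C_mul]
  have hdeg : ∀ v ∈ f.support, (Polynomial.C (C (coeff v f)) * Q v).natDegree =
      v 0 + ∑ i, w i * v i.succ := fun v hv ↦ by
    rw [Polynomial.natDegree_C_mul (hcoeff v hv).ne_zero, hQdeg]
  obtain ⟨v, hv, hvf⟩ := exists_leadingCoeff_sum_eq (support_nonempty.2 hf)
    (P := fun v ↦ Polynomial.C (C (coeff v f)) * Q v)
    (fun v hv h0 ↦ (hcoeff v hv).ne_zero (by rw [← hlc, h0, Polynomial.leadingCoeff_zero]))
    fun u hu v hv huv ↦ DFunLike.coe_injective <|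
      hinj ⟨u, hu, rfl⟩ ⟨v, hv, rfl⟩ ((hdeg u hu).symm.trans (huv.trans (hdeg v hv)))
  refine ⟨fun i ↦ Polynomial.X ^ w i, ?_⟩
  rw [f.as_sum, map_sum]
  simp only [hQ, hvf, hlc]
  exact hcoeff v hv

lemma isIntegral_ringEquiv_comp {S A B : Type*} [CommRing S] [CommRing A] [CommRing B]
    {f : S →+* A} (hf : f.IsIntegral) (e : A ≃+* B) : (e.toRingHom.comp f).IsIntegral :=
  hf.trans _ _ (RingHom.isIntegral_of_surjective _ e.surjective)

lemma exists_flat_isIntegral {f : MvPolynomial (Fin (n + 1)) K} (hf : f ≠ 0) :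
    ∃ ψ : MvPolynomial (Fin n) K →ₐ[K] MvPolynomial (Fin (n + 1)) K,
      ((Ideal.Quotient.mk (Ideal.span {f})).comp ψ.toRingHom).Flat ∧
      ((Ideal.Quotient.mk (Ideal.span {f})).comp ψ.toRingHom).IsIntegral := by
  obtain ⟨t, u, hu⟩ := exists_isUnit_leadingCoeff_shearEquiv hf
  set E := shearEquiv t
  set P := E f * Polynomial.C (↑u⁻¹ : MvPolynomial (Fin n) K)
  have hmonic : P.Monic := Polynomial.monic_mul_C_of_leadingCoeff_mul_eq_one (by simp [← hu])
  have hspan : Ideal.span {P} = Ideal.span {E f} :=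
    Ideal.span_singleton_mul_right_unit (u⁻¹.isUnit.map Polynomial.C) _
  have hmap : Ideal.span {f} = (Ideal.span {P}).map E.symm.toRingEquiv.toRingHom := by
    rw [hspan, Ideal.map_span, Set.image_singleton]
    simp
  let e := Ideal.quotientEquiv (Ideal.span {P}) (Ideal.span {f}) E.symm.toRingEquiv hmap
  have hfree := hmonic.free_quotient
  have hfin := hmonic.finite_quotient
  have hflat : (algebraMap (MvPolynomial (Fin n) K) (_ ⧸ Ideal.span {P})).Flat :=
    RingHom.flat_algebraMap_iff.2 inferInstance
  have hint : (algebraMap (MvPolynomial (Fin n) K) (_ ⧸ Ideal.span {P})).IsIntegral :=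
    algebraMap_isIntegral_iff.2 inferInstance
  have hint' := isIntegral_ringEquiv_comp (A := _ ⧸ Ideal.span {P}) (B := _ ⧸ Ideal.span {f}) hint e
  exact ⟨E.symm.toAlgHom.comp Polynomial.CAlgHom, hflat.comp (.of_bijective e.bijective), hint'⟩

end MonicNormalization

section NormalizationOfPair

lemma dvd_of_dvd_mul_of_dvd {A : Type*} [CommRing A] {x s b f : A} (hbx : b ∣ x)
    (hx : IsSMulRegular A x) (hs : ∀ z, x ∣ s * z → x ∣ z) (hf : b ∣ s * f) : b ∣ f := by
  obtain ⟨c, rfl⟩ := hbx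
  obtain ⟨g, hg⟩ := hf
  obtain ⟨h, hh⟩ := hs (c * f) ⟨g, by linear_combination c * hg⟩
  exact ⟨h, hx (by linear_combination (norm := (simp only [smul_eq_mul]; ring)) b * hh)⟩

lemma isWeaklyRegular_pair_iff {R : Type*} [CommRing R] {x s : R} :
    RingTheory.Sequence.IsWeaklyRegular R [x, s] ↔
      IsSMulRegular R x ∧ ∀ z, x ∣ s * z → x ∣ z := by
  rw [RingTheory.Sequence.isWeaklyRegular_cons_iff,
    RingTheory.Sequence.isWeaklyRegular_singleton_iff,
    isSMulRegular_quotient_iff_mem_of_smul_mem]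
  simp [Submodule.mem_smul_pointwise_iff_exists, dvd_def, eq_comm]

lemma mem_span_pair_iff_mk_dvd {R : Type*} [CommRing R] {a b f : R} :
    f ∈ Ideal.span {a, b} ↔
      Ideal.Quotient.mk (Ideal.span {a}) b ∣ Ideal.Quotient.mk (Ideal.span {a}) f := by
  rw [← Ideal.mem_span_singleton, ← Set.image_singleton, ← Ideal.map_span,
    Ideal.mem_quotient_iff_mem_sup, Ideal.span_insert, sup_comm]

variable {K : Type*} [Field K] {m : ℕ}

lemma exists_ne_zero_dvd_of_isIntegral {T A : Type*} [CommRing T] [CommRing A] [IsDomain T]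
    {ψ : T →+* A} (hψ : ψ.IsIntegral) {b : A} (hb : b ∈ nonZeroDivisors A) :
    ∃ D ≠ 0, b ∣ ψ D := by
  algebraize [ψ]
  have : Algebra.IsAlgebraic T A := inferInstance
  exact (Algebra.IsAlgebraic.isAlgebraic b).exists_nonzero_dvd hb

lemma dvd_of_dvd_mul_of_flat {S T : Type*} [CommRing S] [IsDomain S] [CommRing T] {χ : S →+* T}
    {x : T} (hχ : ((Ideal.Quotient.mk (Ideal.span {x})).comp χ).Flat) {s : S} (hs : s ≠ 0) {z : T}
    (hz : x ∣ χ s * z) : x ∣ z := by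
  algebraize [(Ideal.Quotient.mk (Ideal.span {x})).comp χ]
  have hreg := (IsRegular.of_ne_zero hs).left.isSMulRegular.of_flat (S := T ⧸ Ideal.span {x})
  rw [← Ideal.mem_span_singleton, ← Ideal.Quotient.eq_zero_iff_mem, map_mul] at hz
  rw [← Ideal.mem_span_singleton, ← Ideal.Quotient.eq_zero_iff_mem]
  exact hreg (hz.trans (mul_zero _).symm)

lemma isSMulRegular_and_dvd_of_flat {T A : Type*} [CommRing T] [CommRing A] {ψ : T →+* A}
    (hψ : ψ.Flat) {x s : T} (hx : IsSMulRegular T x) (hs : ∀ z, x ∣ s * z → x ∣ z) :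
    IsSMulRegular A (ψ x) ∧ ∀ z, ψ x ∣ ψ s * z → ψ x ∣ z := by
  algebraize [ψ]
  have hreg := (isWeaklyRegular_pair_iff.2 ⟨hx, hs⟩).of_flat (S := A)
  exact isWeaklyRegular_pair_iff.1 hreg

lemma mk_mem_nonZeroDivisors_of_isRelPrime {R : Type*} [CommRing R] [DecompositionMonoid R]
    {a b : R} (hab : IsRelPrime a b) :
    Ideal.Quotient.mk (Ideal.span {a}) b ∈ nonZeroDivisors (R ⧸ Ideal.span {a}) := by
  refine mem_nonZeroDivisors_iff_right.2 fun z hz ↦ ?_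
  obtain ⟨z, rfl⟩ := Ideal.Quotient.mk_surjective z
  rw [← map_mul, Ideal.Quotient.eq_zero_iff_mem, Ideal.mem_span_singleton] at hz
  rw [Ideal.Quotient.eq_zero_iff_mem, Ideal.mem_span_singleton]
  exact hab.dvd_of_dvd_mul_right hz

lemma isIntegral_mk_comp_of_mem {S T B : Type*} [CommRing S] [CommRing T] [CommRing B]
    {χ : S →+* T} {D : T} (hχ : ((Ideal.Quotient.mk (Ideal.span {D})).comp χ).IsIntegral)
    {ρ : T →+* B} (hρ : ρ.IsIntegral) (hD : ρ D = 0) : (ρ.comp χ).IsIntegral := by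
  have hker : ∀ z ∈ Ideal.span {D}, ρ z = 0 := fun z hz ↦ by
    obtain ⟨w, rfl⟩ := Ideal.mem_span_singleton.1 hz
    rw [map_mul, hD, zero_mul]
  have hlift : (Ideal.Quotient.lift (Ideal.span {D}) ρ hker).IsIntegral :=
    RingHom.IsIntegral.tower_top (Ideal.Quotient.mk (Ideal.span {D})) _
      (by rwa [Ideal.Quotient.lift_comp_mk])
  have hcomp := hχ.trans _ _ hlift
  rwa [← RingHom.comp_assoc, Ideal.Quotient.lift_comp_mk] at hcomp

lemma exists_isIntegral_and_mem_of_mul_mem {a b : MvPolynomial (Fin (m + 2)) K} (ha : a ≠ 0)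
    (hab : IsRelPrime a b) :
    ∃ φ : MvPolynomial (Fin m) K →ₐ[K] MvPolynomial (Fin (m + 2)) K,
      ((Ideal.Quotient.mk (Ideal.span {a, b})).comp φ.toRingHom).IsIntegral ∧
      ∀ s ≠ 0, ∀ f, φ s * f ∈ Ideal.span {a, b} → f ∈ Ideal.span {a, b} := by
  obtain ⟨ψ, hψ, hψint⟩ := exists_flat_isIntegral ha
  have hb : Ideal.Quotient.mk (Ideal.span {a}) b ∈ nonZeroDivisors _ :=
    mk_mem_nonZeroDivisors_of_isRelPrime hab
  obtain ⟨D, hD, hbD⟩ := exists_ne_zero_dvd_of_isIntegral hψint hb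
  obtain ⟨χ, hχ, hχint⟩ := exists_flat_isIntegral hD
  refine ⟨ψ.comp χ, ?_, fun s hs f hf ↦ ?_⟩
  · have hle : Ideal.span {a} ≤ Ideal.span {a, b} := Ideal.span_mono (by simp)
    have hρ := hψint.trans _ _
      (RingHom.isIntegral_of_surjective _ (Ideal.Quotient.factor_surjective hle))
    refine isIntegral_mk_comp_of_mem hχint hρ ?_
    exact Ideal.Quotient.eq_zero_iff_mem.2
      (mem_span_pair_iff_mk_dvd.2 hbD)
  · rw [mem_span_pair_iff_mk_dvd, map_mul] at hf
    have hreg := isSMulRegular_and_dvd_of_flat hψ (IsRegular.of_ne_zero hD).left.isSMulRegular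
      fun z ↦ dvd_of_dvd_mul_of_flat hχ hs
    exact mem_span_pair_iff_mk_dvd.2 (dvd_of_dvd_mul_of_dvd hbD hreg.1 hreg.2 hf)

end NormalizationOfPair

section HilbertFunctionBounds

lemma exists_totalDegree_le_mul {σ τ R : Type*} [Finite σ] [CommSemiring R]
    (φ : MvPolynomial σ R →ₐ[R] MvPolynomial τ R) :
    ∃ D, 0 < D ∧ ∀ f, (φ f).totalDegree ≤ D * f.totalDegree := by
  have := Fintype.ofFinite σ
  refine ⟨∑ i, (φ (X i)).totalDegree + 1, Nat.succ_pos _, fun f ↦ ?_⟩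
  set D := ∑ i, (φ (X i)).totalDegree + 1
  have hX : ∀ i, (φ (X i)).totalDegree ≤ D := fun i ↦ Nat.le_succ_of_le <|
    Finset.single_le_sum (f := fun i ↦ (φ (X i)).totalDegree) (fun _ _ ↦ Nat.zero_le _)
      (Finset.mem_univ i)
  nth_rw 1 [f.as_sum, map_sum]
  refine totalDegree_finsetSum_le fun v hv ↦ ?_
  rw [monomial_eq, map_mul, algHom_C, algebraMap_eq, Finsupp.prod_fintype _ _ fun _ ↦ pow_zero _,
    map_prod]
  calc (C (coeff v f) * ∏ i, φ (X i ^ v i)).totalDegree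
      ≤ (C (coeff v f) : MvPolynomial τ R).totalDegree + ∑ i, (φ (X i ^ v i)).totalDegree :=
        (totalDegree_mul _ _).trans (Nat.add_le_add_left (totalDegree_finsetProd _ _) _)
    _ = ∑ i, (φ (X i ^ v i)).totalDegree := by rw [totalDegree_C, zero_add]
    _ ≤ ∑ i, v i * D := Finset.sum_le_sum fun i _ ↦ by
        rw [map_pow]
        exact (totalDegree_pow _ _).trans (Nat.mul_le_mul_left _ (hX i))
    _ = D * v.degree := by rw [← Finset.sum_mul, mul_comm, Finsupp.degree_eq_sum]
    _ ≤ D * f.totalDegree := Nat.mul_le_mul_left _ (le_totalDegree hv)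

lemma choose_add_succ_le (y d m : ℕ) :
    (y + d).choose (m + 1) ≤ y.choose (m + 1) + d * (y + d).choose m := by
  induction d with
  | zero => simp
  | succ d ih =>
    have hmono : (y + d).choose m ≤ (y + (d + 1)).choose m := Nat.choose_le_choose _ (by lia)
    have hpascal := Nat.choose_succ_succ' (y + d) m
    rw [← add_assoc] at hmono ⊢
    nlinarith

-- An upper bound on the mixed second difference of `x ↦ x.choose (m + 2)` with steps `d` and `e`.
lemma choose_add_add_choose_le (x d e m : ℕ) :
    (x + d + e).choose (m + 2) + x.choose (m + 2) ≤
      (x + d).choose (m + 2) + (x + e).choose (m + 2) + d * e * (x + d + e).choose m := by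
  induction e with
  | zero => simp
  | succ e ih =>
    have hmono : (x + d + e).choose m ≤ (x + d + (e + 1)).choose m :=
      Nat.choose_le_choose _ (by lia)
    have hstep := choose_add_succ_le (x + e) d m
    have hpascal := Nat.choose_succ_succ' (x + d + e) (m + 1)
    have hpascal' := Nat.choose_succ_succ' (x + e) (m + 1)
    rw [add_right_comm x e d] at hstep
    rw [← add_assoc] at hmono ⊢
    rw [← add_assoc x e 1, hpascal, hpascal']
    have hmul := Nat.mul_le_mul_left (d * (e + 1)) hmono
    linarith

variable {K : Type*} [Field K] {σ : Type*}

lemma finrank_map_mulLeft_restrictTotalDegree [Fintype σ] {c : MvPolynomial σ K} (hc : c ≠ 0)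
    (n : ℕ) :
    Module.finrank K ((restrictTotalDegree σ K n).map (LinearMap.mulLeft K c)) =
      (n + Fintype.card σ).choose (Fintype.card σ) := by
  rw [finrank_map_of_disjoint_ker, finrank_restrictTotalDegree]
  exact Submodule.disjoint_def.2 fun f _ hf ↦ (mul_eq_zero.1 hf).resolve_left hc

lemma map_mulLeft_restrictTotalDegree_le (c : MvPolynomial σ K) {n k : ℕ}
    (h : c.totalDegree + n ≤ k) :
    (restrictTotalDegree σ K n).map (LinearMap.mulLeft K c) ≤ restrictTotalDegree σ K k := by
  rintro _ ⟨f, hf, rfl⟩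
  rw [SetLike.mem_coe, mem_restrictTotalDegree] at hf
  rw [mem_restrictTotalDegree]
  exact (totalDegree_mul c f).trans ((Nat.add_le_add_left hf _).trans h)

lemma map_mulLeft_le_restrictScalars {I : Ideal (MvPolynomial σ K)} {c : MvPolynomial σ K}
    (hc : c ∈ I) (V : Submodule K (MvPolynomial σ K)) :
    V.map (LinearMap.mulLeft K c) ≤ I.restrictScalars K := by
  rintro _ ⟨f, -, rfl⟩
  exact I.mul_mem_right f hc

lemma map_mulLeft_inf_map_mulLeft_le {a b : MvPolynomial σ K} (hb : b ≠ 0) (hab : IsRelPrime a b)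
    (n : ℕ) :
    (restrictTotalDegree σ K (n + b.totalDegree)).map (LinearMap.mulLeft K a) ⊓
        (restrictTotalDegree σ K (n + a.totalDegree)).map (LinearMap.mulLeft K b) ≤
      (restrictTotalDegree σ K n).map (LinearMap.mulLeft K (a * b)) := by
  rintro _ ⟨⟨f, hf, rfl⟩, ⟨g, -, hg⟩⟩
  obtain ⟨w, rfl⟩ : b ∣ f := hab.symm.dvd_of_dvd_mul_left ⟨g, hg.symm⟩
  refine ⟨w, ?_, mul_assoc a b w⟩
  rw [SetLike.mem_coe, mem_restrictTotalDegree] at hf ⊢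
  rcases eq_or_ne w 0 with rfl | hw
  · simp
  · rw [totalDegree_mul_of_isDomain hb hw] at hf
    lia

lemma affineHilbert_span_pair_add_le [Fintype σ] {a b : MvPolynomial σ K} (ha : a ≠ 0)
    (hb : b ≠ 0) (hab : IsRelPrime a b) (n : ℕ) :
    affineHilbert (Ideal.span {a, b}) (n + a.totalDegree + b.totalDegree) +
        ((n + a.totalDegree + Fintype.card σ).choose (Fintype.card σ) +
          (n + b.totalDegree + Fintype.card σ).choose (Fintype.card σ)) ≤
      (n + a.totalDegree + b.totalDegree + Fintype.card σ).choose (Fintype.card σ) +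
        (n + Fintype.card σ).choose (Fintype.card σ) := by
  set A := (restrictTotalDegree σ K (n + b.totalDegree)).map (LinearMap.mulLeft K a)
  set B := (restrictTotalDegree σ K (n + a.totalDegree)).map (LinearMap.mulLeft K b)
  have hsup : A ⊔ B ≤ restrictTotalDegree σ K (n + a.totalDegree + b.totalDegree) ⊓
      (Ideal.span {a, b}).restrictScalars K :=
    sup_le
      (le_inf (map_mulLeft_restrictTotalDegree_le a (by lia))
        (map_mulLeft_le_restrictScalars (Ideal.subset_span (by simp)) _))
      (le_inf (map_mulLeft_restrictTotalDegree_le b (by lia))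
        (map_mulLeft_le_restrictScalars (Ideal.subset_span (by simp)) _))
  have hinf : Module.finrank K ↥(A ⊓ B) ≤ _ :=
    Submodule.finrank_mono (map_mulLeft_inf_map_mulLeft_le hb hab n)
  have hle := Submodule.finrank_mono hsup
  have hHilbert := affineHilbert_add_finrank_inf (Ideal.span {a, b})
    (n + a.totalDegree + b.totalDegree)
  have hfinrank := Submodule.finrank_sup_add_finrank_inf_eq A B
  rw [finrank_map_mulLeft_restrictTotalDegree (mul_ne_zero ha hb)] at hinf
  rw [finrank_map_mulLeft_restrictTotalDegree ha,
    finrank_map_mulLeft_restrictTotalDegree hb] at hfinrank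
  rw [finrank_restrictTotalDegree] at hHilbert
  lia

lemma affineHilbert_span_pair_le {m : ℕ} {a b : MvPolynomial (Fin (m + 2)) K} (ha : a ≠ 0)
    (hb : b ≠ 0) (hab : IsRelPrime a b) (n : ℕ) :
    affineHilbert (Ideal.span {a, b}) (n + a.totalDegree + b.totalDegree) ≤
      a.totalDegree * b.totalDegree *
        (n + a.totalDegree + b.totalDegree + 2 + m).choose m := by
  have hpair := affineHilbert_span_pair_add_le ha hb hab n
  have hchoose := choose_add_add_choose_le (n + m + 2) a.totalDegree b.totalDegree m
  rw [Fintype.card_fin] at hpair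
  ring_nf at hpair hchoose ⊢
  lia

variable {τ : Type*} [Finite σ] [Fintype τ] {D : ℕ}
  {φ : MvPolynomial τ K →ₐ[K] MvPolynomial σ K}

lemma choose_le_affineHilbert {p : Ideal (MvPolynomial σ K)} (hφ : ∀ s, φ s ∈ p → s = 0)
    (hD : ∀ s, (φ s).totalDegree ≤ D * s.totalDegree) (k : ℕ) :
    (k + Fintype.card τ).choose (Fintype.card τ) ≤ affineHilbert p (D * k) := by
  have hdisj : Disjoint (restrictTotalDegree τ K k)
      ((Ideal.Quotient.mkₐ K p).comp φ).toLinearMap.ker :=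
    Submodule.disjoint_def.2 fun s _ hs ↦ hφ s (Ideal.Quotient.eq_zero_iff_mem.1 hs)
  rw [← finrank_restrictTotalDegree (K := K), ← finrank_map_of_disjoint_ker hdisj, affineHilbert]
  refine Submodule.finrank_mono ?_
  rintro _ ⟨s, hs, rfl⟩
  rw [SetLike.mem_coe, mem_restrictTotalDegree] at hs
  exact ⟨φ s, (mem_restrictTotalDegree _ _ _).2 ((hD s).trans (Nat.mul_le_mul_left D hs)), rfl⟩

lemma affineHilbert_add_choose_le {J p : Ideal (MvPolynomial σ K)} (hJp : J ≤ p)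
    (hφ : ∀ s ≠ 0, ∀ f, φ s * f ∈ J → f ∈ J) (hD : ∀ s, (φ s).totalDegree ≤ D * s.totalDegree)
    {q : MvPolynomial σ K} (hqp : q ∈ p) (hqJ : q ∉ J) {k n : ℕ}
    (hn : q.totalDegree + D * k ≤ n) :
    affineHilbert p n + (k + Fintype.card τ).choose (Fintype.card τ) ≤ affineHilbert J n := by
  have hinj : ∀ s, q * φ s ∈ J → s = 0 := fun s hs ↦ by
    by_contra h₀
    exact hqJ (hφ s h₀ q (mul_comm q (φ s) ▸ hs))
  have hdisj : Disjoint (restrictTotalDegree τ K k)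
      (LinearMap.mulLeft K q ∘ₗ φ.toLinearMap).ker :=
    Submodule.disjoint_def.2 fun s _ hs ↦ hinj s <| by
      rw [show q * φ s = 0 from hs]
      exact J.zero_mem
  rw [← finrank_restrictTotalDegree (K := K), ← finrank_map_of_disjoint_ker hdisj]
  refine affineHilbert_add_finrank_le hJp ?_ ?_ ?_
  · rw [Submodule.map_comp]
    refine (Submodule.map_mono ?_).trans (map_mulLeft_restrictTotalDegree_le q hn)
    rintro _ ⟨s, hs, rfl⟩
    rw [SetLike.mem_coe, mem_restrictTotalDegree] at hs
    exact (mem_restrictTotalDegree _ _ _).2 ((hD s).trans (Nat.mul_le_mul_left D hs))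
  · rw [Submodule.map_comp]
    exact map_mulLeft_le_restrictScalars hqp _
  · rw [Submodule.disjoint_def]
    rintro _ ⟨s, -, rfl⟩ hs
    rw [hinj s hs, map_zero]

end HilbertFunctionBounds

section LeadingCoefficients

lemma coeff_comp_linear {R : Type*} [Semiring R] [NoZeroDivisors R] {P : Polynomial R} {M : ℕ}
    (hP : P.natDegree ≤ M) {a : R} (ha : a ≠ 0) (b : R) :
    (P.comp (Polynomial.C a * Polynomial.X + Polynomial.C b)).coeff M = P.coeff M * a ^ M := by
  have hlin := Polynomial.natDegree_linear (b := b) ha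
  rcases hP.eq_or_lt with rfl | hlt
  · have hlead := Polynomial.coeff_comp_degree_mul_degree (p := P) (hlin.trans_ne one_ne_zero)
    rwa [hlin, mul_one, Polynomial.leadingCoeff_linear ha] at hlead
  · rw [Polynomial.coeff_eq_zero_of_natDegree_lt hlt, zero_mul,
      Polynomial.coeff_eq_zero_of_natDegree_lt (by rwa [Polynomial.natDegree_comp, hlin, mul_one])]

lemma exists_int_eq_leadingCoeff_mul_factorial {R : Type*} [CommRing R] {P : Polynomial R}
    (h : ∀ᶠ n : ℕ in atTop, ∃ z : ℤ, P.eval (n : R) = z) :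
    ∃ z : ℤ, P.leadingCoeff * P.natDegree.factorial = z := by
  obtain ⟨n₀, hn₀⟩ := eventually_atTop.1 h
  choose! z hz using hn₀
  have hdiff := congrFun (Polynomial.fwdDiff_iter_degree_eq_factorial P) (n₀ : R)
  rw [fwdDiff_iter_eq_sum_shift] at hdiff
  have hsum : P.leadingCoeff * P.natDegree.factorial = ∑ k ∈ Finset.range (P.natDegree + 1),
      ((-1 : ℤ) ^ (P.natDegree - k) * P.natDegree.choose k) •
        P.eval ((n₀ : R) + k • (1 : R)) := by
    simpa using hdiff.symm
  refine ⟨∑ k ∈ Finset.range (P.natDegree + 1),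
    ((-1 : ℤ) ^ (P.natDegree - k) * P.natDegree.choose k) * z (n₀ + k), ?_⟩
  rw [hsum, Int.cast_sum]
  refine Finset.sum_congr rfl fun k _ ↦ ?_
  rw [nsmul_one, ← Nat.cast_add, hz _ (Nat.le_add_right _ _), zsmul_eq_mul, ← Int.cast_mul]

variable {𝕜 : Type*} [NormedField 𝕜] [LinearOrder 𝕜] [IsStrictOrderedRing 𝕜] [OrderTopology 𝕜]
  [Archimedean 𝕜]

lemma coeff_le_coeff_of_eventually_eval_le {P Q : Polynomial 𝕜} {M : ℕ} (hP : P.natDegree ≤ M)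
    (hQ : Q.natDegree ≤ M) (h : ∀ᶠ k : ℕ in atTop, P.eval (k : 𝕜) ≤ Q.eval (k : 𝕜)) :
    P.coeff M ≤ Q.coeff M := by
  by_contra! hlt
  have hcoeff : (Q - P).coeff M < 0 := by rwa [Polynomial.coeff_sub, sub_neg]
  have hdeg : (Q - P).natDegree = M :=
    ((Polynomial.natDegree_sub_le _ _).trans (max_le hQ hP)).antisymm
      (Polynomial.le_natDegree_of_ne_zero hcoeff.ne)
  have hlead : ((Q - P) * Polynomial.X).leadingCoeff ≤ 0 := by
    rw [Polynomial.leadingCoeff_mul_X, Polynomial.leadingCoeff, hdeg]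
    exact hcoeff.le
  have hpos : 0 < ((Q - P) * Polynomial.X).degree := by
    rw [← Polynomial.natDegree_pos_iff_degree_pos,
      Polynomial.natDegree_mul_X fun h₀ ↦ hcoeff.ne (by rw [h₀, Polynomial.coeff_zero])]
    exact Nat.succ_pos _
  have hlim := (Polynomial.tendsto_atBot_of_leadingCoeff_nonpos _ hpos hlead).comp
    (tendsto_natCast_atTop_atTop (R := 𝕜))
  obtain ⟨k, hk, hneg⟩ := (h.and (hlim.eventually_lt_atBot 0)).exists
  simp only [Function.comp_apply, Polynomial.eval_mul, Polynomial.eval_sub,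
    Polynomial.eval_X] at hneg
  exact hneg.not_ge (mul_nonneg (sub_nonneg.2 hk) k.cast_nonneg)

lemma natDegree_eq_and_leadingCoeff_lt {P B : Polynomial 𝕜} (hB : 0 < B.leadingCoeff) {D : 𝕜}
    (hD : 0 < D) {b b' c : 𝕜} (hlow : ∀ᶠ k : ℕ in atTop, B.eval (k : 𝕜) ≤ P.eval (D * k))
    (hup : ∀ᶠ k : ℕ in atTop,
      P.eval (D * k + b) + B.eval (k : 𝕜) ≤ c * B.eval (D * k + b')) :
    P.natDegree = B.natDegree ∧ 0 < P.leadingCoeff ∧ P.leadingCoeff < c * B.leadingCoeff := by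
  let lin (r : 𝕜) : Polynomial 𝕜 := Polynomial.C D * Polynomial.X + Polynomial.C r
  have hcoeff : ∀ M, P.natDegree ≤ M → B.natDegree ≤ M → B.coeff M ≤ P.coeff M * D ^ M ∧
      P.coeff M * D ^ M + B.coeff M ≤ c * (B.coeff M * D ^ M) := by
    intro M hPM hBM
    have hdeg : ∀ {F : Polynomial 𝕜} {r}, F.natDegree ≤ M → (F.comp (lin r)).natDegree ≤ M := by
      intro F r hF
      rwa [Polynomial.natDegree_comp, Polynomial.natDegree_linear hD.ne', mul_one]
    rw [← coeff_comp_linear hBM hD.ne' b', ← Polynomial.coeff_C_mul]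
    constructor
    · rw [← coeff_comp_linear hPM hD.ne' 0]
      exact coeff_le_coeff_of_eventually_eval_le hBM (hdeg hPM) (by simpa using hlow)
    · rw [← coeff_comp_linear hPM hD.ne' b, ← Polynomial.coeff_add]
      exact coeff_le_coeff_of_eventually_eval_le
        ((Polynomial.natDegree_add_le _ _).trans (max_le (hdeg hPM) hBM))
        ((Polynomial.natDegree_C_mul_le _ _).trans (hdeg hBM)) (by simpa using hup)
  have hle : P.natDegree ≤ B.natDegree := by
    by_contra! hlt
    obtain ⟨h₁, h₂⟩ := hcoeff _ le_rfl hlt.le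
    rw [Polynomial.coeff_eq_zero_of_natDegree_lt hlt] at h₁ h₂
    have hzero : P.leadingCoeff * D ^ P.natDegree = 0 := le_antisymm (by simpa using h₂) h₁
    have hP : P = 0 := by simpa [hD.ne'] using hzero
    simp [hP] at hlt
  obtain ⟨h₁, h₂⟩ := hcoeff _ hle le_rfl
  have hpow : 0 < D ^ B.natDegree := pow_pos hD _
  have hpos : 0 < P.coeff B.natDegree := pos_of_mul_pos_left (hB.trans_le h₁) hpow.le
  have hdeg := hle.antisymm (Polynomial.le_natDegree_of_ne_zero hpos.ne')
  rw [Polynomial.leadingCoeff, hdeg]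
  refine ⟨rfl, hpos, lt_of_mul_lt_mul_right ?_ hpow.le⟩
  calc P.coeff B.natDegree * D ^ B.natDegree
      < P.coeff B.natDegree * D ^ B.natDegree + B.leadingCoeff := lt_add_of_pos_right _ hB
    _ ≤ c * (B.leadingCoeff * D ^ B.natDegree) := h₂
    _ = c * B.leadingCoeff * D ^ B.natDegree := (mul_assoc _ _ _).symm

end LeadingCoefficients

section Multiplicity

variable {K σ : Type*} [Field K]

lemma eq_zero_of_mem_of_height_eq_two {R S : Type*} [CommRing R] [IsDomain R]
    [IsNoetherianRing R] [UniqueFactorizationMonoid R] [Zero S] {a b : R} (ha : a ≠ 0)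
    (hab : IsRelPrime a b) {p : Ideal R} [p.IsPrime] (hle : Ideal.span {a, b} ≤ p)
    (hht : p.height = 2) {φ : S → R}
    (hφ : ∀ s ≠ 0, ∀ f, φ s * f ∈ Ideal.span {a, b} → f ∈ Ideal.span {a, b}) (s : S)
    (hs : φ s ∈ p) : s = 0 := by
  by_contra h₀
  have hmin : p ∈ (Ideal.span {a, b}).minimalPrimes :=
    Ideal.mem_minimalPrimes_of_height_le hle (hht ▸ two_le_height_span_pair ha hab)
  obtain ⟨f, hf, hmul⟩ := Ideal.exists_mul_mem_of_mem_minimalPrimes hmin hs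
  exact hf (hφ s h₀ f hmul)

lemma ringKrullDim_quotient_eq_of_isIntegral {R S : Type*} [CommRing R] [CommRing S]
    {φ : S →+* R} {J p : Ideal R} (hJp : J ≤ p) (hint : ((Ideal.Quotient.mk J).comp φ).IsIntegral)
    (hφ : ∀ s, φ s ∈ p → s = 0) : ringKrullDim (R ⧸ p) = ringKrullDim S := by
  refine ringKrullDim_eq_of_injective_of_isIntegral (f := (Ideal.Quotient.mk p).comp φ) ?_ ?_
  · exact (injective_iff_map_eq_zero _).2 fun s hs ↦ hφ s (Ideal.Quotient.eq_zero_iff_mem.1 hs)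
  · exact hint.trans (g := Ideal.Quotient.factor hJp) _ <|
      RingHom.isIntegral_of_surjective _ (Ideal.Quotient.factor_surjective hJp)

attribute [local instance] gradedAlgebra in
lemma isHSMultiplicity_of_eventually_affineHilbert_eq [Finite σ]
    {p : Ideal (MvPolynomial σ K)} (hp : p.IsHomogeneous (homogeneousSubmodule σ K))
    {P : Polynomial ℚ} (hP : ∀ᶠ n in atTop, (affineHilbert p n : ℚ) = P.eval (n : ℚ))
    (hdim : ringKrullDim (MvPolynomial σ K ⧸ p) = P.natDegree) {e : ℕ}
    (he : (e : ℚ) = P.leadingCoeff * P.natDegree.factorial) :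
    IsHSMultiplicity (MvPolynomial σ K) (maxIdeal K σ) p e := by
  refine ⟨_, P.comp (Polynomial.X - Polynomial.C 1), hdim, ?_, ?_, ?_⟩
  · rw [Polynomial.natDegree_comp, Polynomial.natDegree_X_sub_C, mul_one]
  · have hne : (Polynomial.X - Polynomial.C (1 : ℚ)).natDegree ≠ 0 :=
      (Polynomial.natDegree_X_sub_C _).trans_ne one_ne_zero
    rw [he, Polynomial.leadingCoeff_comp hne, Polynomial.leadingCoeff_X_sub_C, one_pow, mul_one]
  · rw [← Filter.map_add_atTop_eq_nat 1, Filter.eventually_map]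
    filter_upwards [hP] with n hn
    refine ⟨affineHilbert p n, by simp [hn], ?_⟩
    rw [moduleLength, ← Module.coe_length]
    exact congrArg _ (length_quotient_sup_pow_idealOfVars hp n)

lemma natDegree_eq_and_leadingCoeff_mul_factorial_lt {H : ℕ → ℕ} {P : Polynomial ℚ}
    (hP : ∀ᶠ n in atTop, (H n : ℚ) = P.eval (n : ℚ)) {m D r r' c : ℕ} (hD : 0 < D)
    (hlow : ∀ k, (k + m).choose m ≤ H (D * k))
    (hup : ∀ k, H (D * k + r) + (k + m).choose m ≤ c * (D * k + r' + m).choose m) :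
    P.natDegree = m ∧ 0 < P.leadingCoeff * m.factorial ∧ P.leadingCoeff * m.factorial < c := by
  have hB (k : ℕ) : (Polynomial.preHilbertPoly ℚ m 0).eval (k : ℚ) = (k + m).choose m :=
    Polynomial.preHilbertPoly_eq_choose_sub_add ℚ m k.zero_le
  have hlead : (Polynomial.preHilbertPoly ℚ m 0).leadingCoeff = (m.factorial : ℚ)⁻¹ :=
    Polynomial.leadingCoeff_preHilbertPoly ..
  have hfact : (0 : ℚ) < m.factorial := mod_cast m.factorial_pos
  have hP' (s : ℕ) : ∀ᶠ k : ℕ in atTop, (H (D * k + s) : ℚ) = P.eval ((D * k + s : ℕ) : ℚ) :=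
    ((tendsto_add_atTop_nat s).comp (tendsto_id.const_mul_atTop' hD)).eventually hP
  obtain ⟨hdeg, hpos, hlt⟩ := natDegree_eq_and_leadingCoeff_lt (P := P)
    (B := Polynomial.preHilbertPoly ℚ m 0) (D := (D : ℚ)) (b := r) (b' := r') (c := c)
    (hlead ▸ inv_pos.2 hfact) (mod_cast hD)
    (by
      filter_upwards [hP' 0] with k hk
      rw [hB, ← Nat.cast_mul, ← add_zero (D * k), ← hk]
      exact mod_cast hlow k)
    (by
      filter_upwards [hP' r] with k hk
      rw [hB, ← Nat.cast_mul, ← Nat.cast_add, ← Nat.cast_add, hB, ← hk]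
      exact mod_cast hup k)
  rw [Polynomial.natDegree_preHilbertPoly] at hdeg
  rw [hlead, ← div_eq_mul_inv, lt_div_iff₀ hfact] at hlt
  exact ⟨hdeg, mul_pos hpos hfact, hlt⟩

attribute [local instance] gradedAlgebra in
lemma exists_isHSMultiplicity_of_bounds [Finite σ] {p : Ideal (MvPolynomial σ K)}
    (hp : p.IsHomogeneous (homogeneousSubmodule σ K)) {m D r r' c : ℕ}
    (hdim : ringKrullDim (MvPolynomial σ K ⧸ p) = m) (hD : 0 < D)
    (hlow : ∀ k, (k + m).choose m ≤ affineHilbert p (D * k))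
    (hup : ∀ k, affineHilbert p (D * k + r) + (k + m).choose m ≤
      c * (D * k + r' + m).choose m) :
    ∃ e < c, IsHSMultiplicity (MvPolynomial σ K) (maxIdeal K σ) p e := by
  obtain ⟨P, hP⟩ := exists_eval_eq_affineHilbert p
  obtain ⟨rfl, hpos, hlt⟩ := natDegree_eq_and_leadingCoeff_mul_factorial_lt hP hD hlow hup
  obtain ⟨z, hz⟩ := exists_int_eq_leadingCoeff_mul_factorial (P := P) <|
    hP.mono fun n hn ↦ ⟨affineHilbert p n, by rw [← hn, Int.cast_natCast]⟩
  rw [hz] at hpos hlt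
  lift z to ℕ using mod_cast hpos.le
  exact ⟨z, mod_cast hlt, isHSMultiplicity_of_eventually_affineHilbert_eq hp hP hdim
    (mod_cast hz.symm)⟩

attribute [local instance] gradedAlgebra in
theorem exists_isHSMultiplicity_lt_mul_totalDegree {N : ℕ} {a b q : MvPolynomial (Fin N) K}
    (ha : a ≠ 0) (hb : b ≠ 0) (hab : IsRelPrime a b) {p : Ideal (MvPolynomial (Fin N) K)}
    [p.IsPrime] (hp : p.IsHomogeneous (homogeneousSubmodule (Fin N) K)) (hht : p.height = 2)
    (hle : Ideal.span {a, b} ≤ p) (hqp : q ∈ p) (hq : q ∉ Ideal.span {a, b}) :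
    ∃ e < a.totalDegree * b.totalDegree,
      IsHSMultiplicity (MvPolynomial (Fin N) K) (maxIdeal K (Fin N)) p e := by
  obtain ⟨m, rfl⟩ : ∃ m, N = m + 2 := by
    have hdim := Ideal.height_le_ringKrullDim_of_isPrime (I := p)
    rw [hht, ringKrullDim_mvPolynomial_of_field, Nat.card_fin] at hdim
    exact Nat.exists_eq_add_of_le' (mod_cast hdim)
  obtain ⟨φ, hint, hφ⟩ := exists_isIntegral_and_mem_of_mul_mem ha hab
  obtain ⟨D, hD, hdeg⟩ := exists_totalDegree_le_mul φ
  have hφp : ∀ s, φ s ∈ p → s = 0 := eq_zero_of_mem_of_height_eq_two ha hab hle hht hφ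
  have hdim : ringKrullDim (MvPolynomial (Fin (m + 2)) K ⧸ p) = m := by
    rw [ringKrullDim_quotient_eq_of_isIntegral hle hint hφp, ringKrullDim_mvPolynomial_of_field,
      Nat.card_fin]
  refine exists_isHSMultiplicity_of_bounds hp hdim hD
    (r := q.totalDegree + a.totalDegree + b.totalDegree)
    (r' := q.totalDegree + a.totalDegree + b.totalDegree + 2) (fun k ↦ ?_) fun k ↦ ?_
  · simpa only [Fintype.card_fin] using choose_le_affineHilbert hφp hdeg k
  · have hupper := affineHilbert_add_choose_le hle hφ hdeg hqp hq (k := k)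
      (n := D * k + q.totalDegree + a.totalDegree + b.totalDegree) (by lia)
    rw [Fintype.card_fin] at hupper
    simpa only [add_assoc] using
      hupper.trans (affineHilbert_span_pair_le ha hb hab (D * k + q.totalDegree))

end Multiplicity

lemma exists_notMem_span_range_of_lt {R ι : Type*} [CommRing R] {k n : ℕ} (hkn : k < n)
    {I : Ideal R} {g : ι → R} (hI : I = Ideal.span (Set.range g))
    (hmin : ∀ (k : ℕ) (h : Fin k → R), I = Ideal.span (Set.range h) → n ≤ k) {h : Fin k → R}
    (hle : Ideal.span (Set.range h) ≤ I) : ∃ i, g i ∉ Ideal.span (Set.range h) := by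
  by_contra! hmem
  have hle' : I ≤ Ideal.span (Set.range h) :=
    hI.trans_le (Ideal.span_le.2 (Set.range_subset_iff.2 hmem))
  exact hkn.not_ge (hmin k h (hle'.antisymm hle))

/-- for an ideal minimally generated by `n ≥ 3` quadrics with `ht I = 2`,
any minimal prime `p` of `I` with `ht p = 2` has `e(R/p) ≤ 3`. -/
theorem stmt3 (K : Type u) [Field K] (N n : ℕ) (hn : 3 ≤ n)
    (I : Ideal (MvPolynomial (Fin N) K)) (g : Fin n → MvPolynomial (Fin N) K)
    (hg : ∀ i, (g i).IsHomogeneous 2)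
    (hI : I = Ideal.span (Set.range g))
    (hmin : ∀ (k : ℕ) (h : Fin k → MvPolynomial (Fin N) K),
      I = Ideal.span (Set.range h) → n ≤ k)
    (hht : idealHeight I = 2)
    (p : Ideal (MvPolynomial (Fin N) K)) (hp : p ∈ I.minimalPrimes)
    (hpht : idealHeight p = 2) :
    ∃ e : ℕ, e ≤ 3 ∧ IsHSMultiplicity (MvPolynomial (Fin N) K) (maxIdeal K (Fin N)) p e := by
  rw [idealHeight_eq_height] at hht hpht
  have := hp.1.1
  have hquadric : Submodule.span K (Set.range g) ≤ homogeneousSubmodule (Fin N) K 2 :=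
    Submodule.span_le.2 (Set.range_subset_iff.2 hg)
  have hspan : Ideal.span (Submodule.span K (Set.range g) : Set (MvPolynomial (Fin N) K)) = I :=
    hI ▸ Submodule.span_span_of_tower K _ (Set.range g)
  obtain ⟨a, ha, b, hb, ha₀, hb₀, hab⟩ :=
    exists_isRelPrime_of_le_homogeneousSubmodule hquadric (hspan ▸ hht.ge)
  have hle : Ideal.span {a, b} ≤ I :=
    (Ideal.span_mono (Set.pair_subset ha hb)).trans hspan.le
  obtain ⟨i, hi⟩ := exists_notMem_span_range_of_lt hn hI hmin (h := ![a, b])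
    (by rwa [Matrix.range_cons_cons_empty])
  rw [Matrix.range_cons_cons_empty] at hi
  obtain ⟨e, he, hmult⟩ := exists_isHSMultiplicity_lt_mul_totalDegree ha₀ hb₀ hab
    (isHomogeneous_of_mem_minimalPrimes_span (Set.forall_mem_range.2 hg) (hI ▸ hp)) hpht
    (hle.trans hp.1.2) (hp.1.2 (hI ▸ Ideal.subset_span ⟨i, rfl⟩)) hi
  rw [(hquadric ha).totalDegree ha₀, (hquadric hb).totalDegree hb₀] at he
  exact ⟨e, Nat.le_of_lt_succ he, hmult⟩
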